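/- Let τ > 0 and let G_τ be the two-dimensional Gaussian (heat) kernel G_τ(x) = (4πτ)^{-1} exp(−|x|²/(4τ)). Let u = (u_1,…,u_n) and v = (v_1,…,v_n) be measurable functions from a bounded measurable set Ω ⊂ ℝ² of finite measure to [0,1]ⁿ with Σ_{i=1}^n u_i(x) = Σ_{i=1}^n v_i(x) = 1 for a.e. x ∈ Ω (extended by zero to ℝ²). Then Σ_{i=1}^n Σ_{j≠i} ∫_Ω [ v_i (G_τ * v_j) + u_i (G_τ * u_j) − 2 v_i (G_τ * u_j) ] dx = − Σ_{i=1}^n ∫_Ω (v_i − u_i) · (G_τ * (v_i − u_i)) dx ≤ 0. -/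

import Mathlib

/-!
Write `B(f, g) = ∫ f (G_τ * g)`. It is a symmetric bilinear form on integrable functions, since the
kernel is bounded and even. As `∑ᵢ uᵢ = ∑ᵢ vᵢ` almost everywhere, the double sum over *all* pairs
`(i, j)` equals `B(s, s) + B(s, s) - 2 B(s, s) = 0`, where `s = ∑ᵢ uᵢ`. The sum over `j ≠ i` is
therefore minus the diagonal sum, and by symmetry its `i`-th term is
`B(vᵢ, vᵢ) + B(uᵢ, uᵢ) - 2 B(vᵢ, uᵢ) = B(vᵢ - uᵢ, vᵢ - uᵢ)`.

Nonnegativity of `B(w, w)` comes from the semigroup identity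
`G_τ(x - y) = ∫ G_{τ/2}(x - z) G_{τ/2}(y - z) dz` (`gauss_semigroup`): by Fubini,
`B(w, w) = ∫ (∫ w(x) G_{τ/2}(x - z) dx)² dz` (`gaussForm_self_nonneg`).
-/

open MeasureTheory Real

noncomputable section

/-- The two-dimensional Gaussian (heat) kernel `G_τ(x) = (4πτ)⁻¹ exp(-|x|²/(4τ))`. -/
def gauss (τ : ℝ) (x : EuclideanSpace ℝ (Fin 2)) : ℝ :=
  (4 * π * τ)⁻¹ * Real.exp (-‖x‖ ^ 2 / (4 * τ))

/-- Convolution on `ℝ²`: `(k * v)(x) = ∫ k(x - y) v(y) dy`. -/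
def gconv (k v : EuclideanSpace ℝ (Fin 2) → ℝ) (x : EuclideanSpace ℝ (Fin 2)) : ℝ :=
  ∫ y, k (x - y) * v y

/-- Membership in `Λ₁`: measurable functions `u = (u₁, …, uₙ)`, extended by zero
outside `Ω`, with `uᵢ(x) ∈ {0,1}` and `∑ᵢ uᵢ(x) = 1` for a.e. `x ∈ Ω`. -/
def InLambda1 {n : ℕ} (Ω : Set (EuclideanSpace ℝ (Fin 2)))
    (u : Fin n → EuclideanSpace ℝ (Fin 2) → ℝ) : Prop :=
  (∀ i, Measurable (u i)) ∧ (∀ i, ∀ x, x ∉ Ω → u i x = 0) ∧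
  (∀ᵐ x ∂(volume.restrict Ω), (∀ i, u i x = 0 ∨ u i x = 1) ∧ (∑ i, u i x) = 1)

/-- Membership in `Λ₂` (the convex relaxation of `Λ₁`): measurable functions,
extended by zero outside `Ω`, with `uᵢ(x) ∈ [0,1]` and `∑ᵢ uᵢ(x) = 1` a.e. on `Ω`. -/
def InLambda2 {n : ℕ} (Ω : Set (EuclideanSpace ℝ (Fin 2)))
    (u : Fin n → EuclideanSpace ℝ (Fin 2) → ℝ) : Prop :=
  (∀ i, Measurable (u i)) ∧ (∀ i, ∀ x, x ∉ Ω → u i x = 0) ∧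
  (∀ᵐ x ∂(volume.restrict Ω), (∀ i, u i x ∈ Set.Icc (0 : ℝ) 1) ∧ (∑ i, u i x) = 1)

/-- The ICTM segmentation energy
`E(u) = ∑ᵢ λᵢ ∫_Ω uᵢ eᵢ + μ √(π/τ) ∑ᵢ ∑_{j≠i} ∫_Ω uᵢ (G_τ * uⱼ)`. -/
def ictmEnergy {n : ℕ} (Ω : Set (EuclideanSpace ℝ (Fin 2))) (τ μ : ℝ)
    (lam : Fin n → ℝ) (e u : Fin n → EuclideanSpace ℝ (Fin 2) → ℝ) : ℝ :=
  (∑ i, lam i * ∫ x in Ω, u i x * e i x) +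
    μ * Real.sqrt (π / τ) *
      ∑ i, ∑ j ∈ Finset.univ.erase i, ∫ x in Ω, u i x * gconv (gauss τ) (u j) x

/-- The bilinear form `B(f, g) = ∫ f (G_τ * g)` over the whole plane. -/
def gaussForm (τ : ℝ) (f g : EuclideanSpace ℝ (Fin 2) → ℝ) : ℝ :=
  ∫ x, f x * gconv (gauss τ) g x

lemma gauss_nonneg {τ : ℝ} (hτ : 0 < τ) (x : EuclideanSpace ℝ (Fin 2)) : 0 ≤ gauss τ x := by
  unfold gauss; positivity

lemma gauss_le {τ : ℝ} (hτ : 0 < τ) (x : EuclideanSpace ℝ (Fin 2)) :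
    ‖gauss τ x‖ ≤ (4 * π * τ)⁻¹ := by
  rw [Real.norm_of_nonneg (gauss_nonneg hτ x)]
  unfold gauss
  refine mul_le_of_le_one_right (by positivity) (Real.exp_le_one_iff.2 ?_)
  rw [neg_div]
  exact neg_nonpos.2 (by positivity)

@[fun_prop]
lemma continuous_gauss (τ : ℝ) : Continuous (gauss τ) := by
  unfold gauss; fun_prop

lemma gauss_sub_comm (τ : ℝ) (x y : EuclideanSpace ℝ (Fin 2)) :
    gauss τ (x - y) = gauss τ (y - x) := by
  simp only [gauss, norm_sub_rev]

lemma integral_gauss {τ : ℝ} (hτ : 0 < τ) : ∫ x, gauss τ x = 1 := by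
  have h := GaussianFourier.integral_rexp_neg_mul_sq_norm
    (V := EuclideanSpace ℝ (Fin 2)) (b := 1 / (4 * τ)) (by positivity)
  have h2 : ∀ x : EuclideanSpace ℝ (Fin 2),
      gauss τ x = (4 * π * τ)⁻¹ * Real.exp (-(1 / (4 * τ)) * ‖x‖ ^ 2) := by
    intro x; unfold gauss; congr 2; ring
  simp_rw [h2]
  rw [integral_const_mul, h]
  simp
  field_simp

lemma integrable_gauss {τ : ℝ} (hτ : 0 < τ) : Integrable (gauss τ) := by
  -- a non-integrable function would have Bochner integral `0`
  by_contra h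
  have := integral_gauss hτ
  rw [integral_undef h] at this
  exact zero_ne_one this

/-- By the parallelogram law, the product of the two half-time kernels is `G_τ(x - y)` times a
Gaussian of time `τ/4` centred at the midpoint of `x` and `y`. -/
lemma gauss_half_mul {τ : ℝ} (hτ : 0 < τ) (x y z : EuclideanSpace ℝ (Fin 2)) :
    gauss (τ / 2) (x - z) * gauss (τ / 2) (y - z) =
      gauss τ (x - y) * gauss (τ / 4) (z - (1 / 2 : ℝ) • (x + y)) := by
  have h := parallelogram_law_with_norm ℝ (x - z) (y - z)
  have e1 : x - z + (y - z) = (-2 : ℝ) • (z - (1 / 2 : ℝ) • (x + y)) := by module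
  have e2 : x - z - (y - z) = x - y := by module
  rw [e1, e2, norm_smul, show ‖(-2 : ℝ)‖ = 2 by norm_num] at h
  unfold gauss
  rw [mul_mul_mul_comm, ← Real.exp_add, mul_mul_mul_comm, ← Real.exp_add]
  congr 1
  · field_simp; norm_num
  · congr 1
    field_simp
    linarith

lemma gauss_semigroup {τ : ℝ} (hτ : 0 < τ) (x y : EuclideanSpace ℝ (Fin 2)) :
    ∫ z, gauss (τ / 2) (x - z) * gauss (τ / 2) (y - z) = gauss τ (x - y) := by
  simp_rw [gauss_half_mul hτ]
  rw [integral_const_mul, integral_sub_right_eq_self (gauss (τ / 4)),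
    integral_gauss (by positivity), mul_one]

lemma integrable_gauss_mul_gauss {τ : ℝ} (hτ : 0 < τ) (x y : EuclideanSpace ℝ (Fin 2)) :
    Integrable fun z => gauss (τ / 2) (x - z) * gauss (τ / 2) (y - z) := by
  simp_rw [gauss_half_mul hτ]
  exact ((integrable_gauss (by positivity)).comp_sub_right _).const_mul _

section

variable {τ : ℝ} {f g h : EuclideanSpace ℝ (Fin 2) → ℝ}

lemma integrable_kernel (hτ : 0 < τ) (hf : Integrable f) (hg : Integrable g) :
    Integrable (fun p : EuclideanSpace ℝ (Fin 2) × EuclideanSpace ℝ (Fin 2) =>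
      f p.1 * g p.2 * gauss τ (p.1 - p.2)) (volume.prod volume) :=
  (hf.mul_prod hg).mul_bdd (c := (4 * π * τ)⁻¹)
    (by fun_prop) (.of_forall fun _ => gauss_le hτ _)

lemma mul_gconv (x : EuclideanSpace ℝ (Fin 2)) :
    f x * gconv (gauss τ) g x = ∫ y, f x * g y * gauss τ (x - y) := by
  rw [gconv, ← integral_const_mul]
  congr 1; ext y; ring

lemma integrable_mul_gconv (hτ : 0 < τ) (hf : Integrable f) (hg : Integrable g) :
    Integrable fun x => f x * gconv (gauss τ) g x := by
  simp_rw [mul_gconv]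
  exact (integrable_kernel hτ hf hg).integral_prod_left

lemma gaussForm_eq_prod (hτ : 0 < τ) (hf : Integrable f) (hg : Integrable g) :
    gaussForm τ f g = ∫ p : EuclideanSpace ℝ (Fin 2) × EuclideanSpace ℝ (Fin 2),
      f p.1 * g p.2 * gauss τ (p.1 - p.2) ∂(volume.prod volume) := by
  simp_rw [gaussForm, mul_gconv]
  exact (integral_prod _ (integrable_kernel hτ hf hg)).symm

lemma gaussForm_comm (hτ : 0 < τ) (hf : Integrable f) (hg : Integrable g) :
    gaussForm τ f g = gaussForm τ g f := by
  rw [gaussForm_eq_prod hτ hf hg, gaussForm_eq_prod hτ hg hf, ← integral_prod_swap]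
  congr 1; ext p
  simp only [Prod.fst_swap, Prod.snd_swap]
  rw [gauss_sub_comm]; ring

lemma gaussForm_sub_left (hτ : 0 < τ) (hf : Integrable f) (hg : Integrable g)
    (hh : Integrable h) :
    gaussForm τ (fun x => f x - g x) h = gaussForm τ f h - gaussForm τ g h := by
  simp only [gaussForm, sub_mul]
  exact integral_sub (integrable_mul_gconv hτ hf hh) (integrable_mul_gconv hτ hg hh)

lemma gaussForm_sub_self (hτ : 0 < τ) (hf : Integrable f) (hg : Integrable g) :
    gaussForm τ (fun x => f x - g x) (fun x => f x - g x) =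
      gaussForm τ f f + gaussForm τ g g - 2 * gaussForm τ f g := by
  have hfg : Integrable fun x => f x - g x := hf.sub hg
  rw [gaussForm_sub_left hτ hf hg hfg, gaussForm_comm hτ hf hfg, gaussForm_comm hτ hg hfg,
    gaussForm_sub_left hτ hf hg hf, gaussForm_sub_left hτ hf hg hg, gaussForm_comm hτ hg hf]
  ring

lemma gaussForm_sum_left {n : ℕ} (hτ : 0 < τ) {F : Fin n → EuclideanSpace ℝ (Fin 2) → ℝ}
    (hF : ∀ i, Integrable (F i)) (hg : Integrable g) :
    gaussForm τ (fun x => ∑ i, F i x) g = ∑ i, gaussForm τ (F i) g := by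
  simp only [gaussForm, Finset.sum_mul]
  exact integral_finsetSum _ fun i _ => integrable_mul_gconv hτ (hF i) hg

lemma gaussForm_sum_sum {n : ℕ} (hτ : 0 < τ) {F H : Fin n → EuclideanSpace ℝ (Fin 2) → ℝ}
    (hF : ∀ i, Integrable (F i)) (hH : ∀ i, Integrable (H i)) :
    ∑ i, ∑ j, gaussForm τ (F i) (H j) =
      gaussForm τ (fun x => ∑ i, F i x) (fun x => ∑ i, H i x) := by
  have hS : Integrable fun x => ∑ i, H i x := integrable_finsetSum _ fun i _ => hH i
  rw [gaussForm_sum_left hτ hF hS]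
  refine Finset.sum_congr rfl fun i _ => ?_
  rw [gaussForm_comm hτ (hF i) hS, gaussForm_sum_left hτ hH (hF i)]
  exact Finset.sum_congr rfl fun j _ => gaussForm_comm hτ (hF i) (hH j)

lemma gaussForm_congr {f' g' : EuclideanSpace ℝ (Fin 2) → ℝ} (hf : f =ᵐ[volume] f')
    (hg : g =ᵐ[volume] g') : gaussForm τ f g = gaussForm τ f' g' := by
  have hc : gconv (gauss τ) g = gconv (gauss τ) g' := by
    ext x
    refine integral_congr_ae ?_
    filter_upwards [hg] with y hy
    rw [hy]
  unfold gaussForm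
  rw [hc]
  refine integral_congr_ae ?_
  filter_upwards [hf] with x hx
  rw [hx]

/-- The Gaussian kernel is positive semidefinite: `B(w, w)` is the squared `L²` norm of
`G_{τ/2} * w`. -/
lemma gaussForm_self_nonneg (hτ : 0 < τ) (hf : Integrable f) : 0 ≤ gaussForm τ f f := by
  let F : (EuclideanSpace ℝ (Fin 2) × EuclideanSpace ℝ (Fin 2)) → EuclideanSpace ℝ (Fin 2) → ℝ :=
    fun p z => f p.1 * f p.2 * (gauss (τ / 2) (p.1 - z) * gauss (τ / 2) (p.2 - z))
  have hFint : Integrable (Function.uncurry F)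
      (((volume : Measure (EuclideanSpace ℝ (Fin 2))).prod volume).prod volume) := by
    have hm : AEStronglyMeasurable (Function.uncurry F)
        (((volume : Measure (EuclideanSpace ℝ (Fin 2))).prod volume).prod volume) :=
      ((hf.mul_prod hf).aestronglyMeasurable.comp_fst).mul
        (Continuous.aestronglyMeasurable (by fun_prop))
    rw [integrable_prod_iff hm]
    refine ⟨.of_forall fun p => (integrable_gauss_mul_gauss hτ p.1 p.2).const_mul (f p.1 * f p.2), ?_⟩
    refine (integrable_kernel hτ hf hf).norm.congr (.of_forall fun p => ?_)
    have hn : ∀ z, ‖Function.uncurry F (p, z)‖ = ‖f p.1 * f p.2‖ *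
        (gauss (τ / 2) (p.1 - z) * gauss (τ / 2) (p.2 - z)) := fun z => by
      simp only [Function.uncurry, F]
      rw [norm_mul, Real.norm_of_nonneg (mul_nonneg (gauss_nonneg (half_pos hτ) _)
        (gauss_nonneg (half_pos hτ) _))]
    simp only [hn]
    rw [integral_const_mul, gauss_semigroup hτ, norm_mul,
      Real.norm_of_nonneg (gauss_nonneg hτ _)]
  have h1 : gaussForm τ f f = ∫ p, ∫ z, F p z ∂volume ∂(volume.prod volume) := by
    rw [gaussForm_eq_prod hτ hf hf]
    refine integral_congr_ae (.of_forall fun p => ?_)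
    simp only [F]
    rw [integral_const_mul, gauss_semigroup hτ]
  rw [h1, integral_integral_swap hFint]
  refine integral_nonneg fun z => ?_
  have h2 : ∀ p, F p z = (f p.1 * gauss (τ / 2) (p.1 - z)) * (f p.2 * gauss (τ / 2) (p.2 - z)) :=
    fun p => by simp only [F]; ring
  simp only [h2]
  rw [integral_prod_mul (fun x => f x * gauss (τ / 2) (x - z))
    (fun x => f x * gauss (τ / 2) (x - z))]
  exact mul_self_nonneg _

end

lemma InLambda2.integrable {n : ℕ} {Ω : Set (EuclideanSpace ℝ (Fin 2))}
    (hΩfin : volume Ω ≠ ⊤) {u : Fin n → EuclideanSpace ℝ (Fin 2) → ℝ} (hu : InLambda2 Ω u)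
    (i : Fin n) : Integrable (u i) := by
  obtain ⟨hm, h0, hae⟩ := hu
  have hon : IntegrableOn (u i) Ω := by
    refine Measure.integrableOn_of_bounded (M := 1) hΩfin (hm i).aestronglyMeasurable ?_
    filter_upwards [hae] with x hx
    rw [Real.norm_of_nonneg (hx.1 i).1]
    exact (hx.1 i).2
  exact hon.integrable_of_forall_notMem_eq_zero fun x hx => h0 i x hx

/-- **The quantity `M` in the ICTM energy-decay proof.**
For simplex-valued `u, v` (extended by zero outside `Ω`),
`∑ᵢ ∑_{j≠i} ∫_Ω [vᵢ (G_τ*vⱼ) + uᵢ (G_τ*uⱼ) - 2 vᵢ (G_τ*uⱼ)]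
  = -∑ᵢ ∫_Ω (vᵢ-uᵢ) (G_τ*(vᵢ-uᵢ)) ≤ 0`. -/
theorem ictm_cross_term_identity {n : ℕ}
    (Ω : Set (EuclideanSpace ℝ (Fin 2))) (hΩm : MeasurableSet Ω)
    (hΩb : Bornology.IsBounded Ω) (hΩfin : volume Ω ≠ ⊤)
    (τ : ℝ) (hτ : 0 < τ)
    (u v : Fin n → EuclideanSpace ℝ (Fin 2) → ℝ)
    (hu : InLambda2 Ω u) (hv : InLambda2 Ω v) :
    (∑ i, ∑ j ∈ Finset.univ.erase i, ∫ x in Ω,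
        (v i x * gconv (gauss τ) (v j) x + u i x * gconv (gauss τ) (u j) x
          - 2 * v i x * gconv (gauss τ) (u j) x)) =
      -∑ i, ∫ x in Ω,
        (v i x - u i x) * gconv (gauss τ) (fun y => v i y - u i y) x ∧
    -∑ i, (∫ x in Ω,
        (v i x - u i x) * gconv (gauss τ) (fun y => v i y - u i y) x) ≤ 0 := by
  have hui := hu.integrable hΩfin
  have hvi := hv.integrable hΩfin
  have hwi : ∀ i, Integrable fun x => v i x - u i x := fun i => (hvi i).sub (hui i)
  have hsum : (fun x => ∑ i, v i x) =ᵐ[volume] fun x => ∑ i, u i x := by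
    filter_upwards [(ae_restrict_iff' hΩm).1 hu.2.2, (ae_restrict_iff' hΩm).1 hv.2.2]
      with x hxu hxv
    by_cases hx : x ∈ Ω
    · rw [(hxu hx).2, (hxv hx).2]
    · simp [hu.2.1 _ x hx, hv.2.1 _ x hx]
  have hoff : ∀ i j, ∫ x in Ω,
        (v i x * gconv (gauss τ) (v j) x + u i x * gconv (gauss τ) (u j) x
          - 2 * v i x * gconv (gauss τ) (u j) x) =
      gaussForm τ (v i) (v j) + gaussForm τ (u i) (u j) - 2 * gaussForm τ (v i) (u j) := by
    intro i j
    have hvv := integrable_mul_gconv hτ (hvi i) (hvi j)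
    have huu := integrable_mul_gconv hτ (hui i) (hui j)
    have hvu := integrable_mul_gconv hτ (hvi i) (hui j)
    rw [setIntegral_eq_integral_of_forall_compl_eq_zero
      fun x hx => by simp [hu.2.1 _ x hx, hv.2.1 _ x hx]]
    simp only [mul_assoc]
    rw [integral_sub (by exact hvv.add huu) (hvu.const_mul 2), integral_add hvv huu,
      integral_const_mul]
    rfl
  have hdiag : ∀ i, ∫ x in Ω,
        (v i x - u i x) * gconv (gauss τ) (fun y => v i y - u i y) x =
      gaussForm τ (fun x => v i x - u i x) (fun x => v i x - u i x) := by
    intro i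
    exact setIntegral_eq_integral_of_forall_compl_eq_zero
      fun x hx => by simp [hu.2.1 _ x hx, hv.2.1 _ x hx]
  simp only [hoff, hdiag]
  refine ⟨?_, neg_nonpos.2 (Finset.sum_nonneg fun i _ => gaussForm_self_nonneg hτ (hwi i))⟩
  -- the sum over all pairs vanishes, leaving minus the diagonal
  have hall : ∑ i, ∑ j, (gaussForm τ (v i) (v j) + gaussForm τ (u i) (u j)
      - 2 * gaussForm τ (v i) (u j)) = 0 := by
    simp only [Finset.sum_sub_distrib, Finset.sum_add_distrib, ← Finset.mul_sum]
    rw [gaussForm_sum_sum hτ hvi hvi, gaussForm_sum_sum hτ hui hui, gaussForm_sum_sum hτ hvi hui,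
      gaussForm_congr hsum hsum, gaussForm_congr hsum (Filter.EventuallyEq.refl _ _)]
    ring
  simp only [Finset.sum_erase_eq_sub (Finset.mem_univ _)]
  rw [Finset.sum_sub_distrib, hall, zero_sub]
  simp only [gaussForm_sub_self hτ (hvi _) (hui _)]
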